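/- Let F₃ be the analytic function on the open unit disc 𝔻 = {q ∈ ℂ : |q| < 1} defined by the absolutely convergent series F₃(q) = Σ_{n=1}^∞ n² qⁿ/(1 − qⁿ), and let D = q·d/dq. Then the functions F₃, D F₃, D² F₃, … are linearly independent over the field of rational functions: for every m ≥ 0 and every choice of polynomials p₀, …, p_m ∈ ℂ[q], not all zero, the analytic function q ↦ Σ_{i=0}^m p_i(q)·(Dⁱ F₃)(q) is not identically zero on 𝔻. -/

import Mathlib

/-!
STATEMENT 8: the functions `F₃, D F₃, D² F₃, …` (where `F₃(q) = Σ_{n≥1}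
n² qⁿ/(1−qⁿ)` on the unit disc and `D = q·d/dq`) are linearly independent over
the field of rational functions: no nontrivial linear combination with
polynomial coefficients vanishes identically on the disc.
-/

open Complex

/-- `F₃(q) = Σ_{n=1}^∞ n² qⁿ/(1 − qⁿ)`. -/
noncomputable def F₃ : ℂ → ℂ :=
  fun q => ∑' n : ℕ, ((n : ℂ) + 1) ^ 2 * q ^ (n + 1) / (1 - q ^ (n + 1))

/-- The operator `D = q · d/dq`. -/
noncomputable def Dop : (ℂ → ℂ) → ℂ → ℂ := fun f q => q * deriv f q

lemma hasSum_congr_aux {f g : ℕ → ℂ} {a : ℂ} (h : ∀ n, f n = g n) : HasSum f a ↔ HasSum g a := by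
  rw [funext h]

open Filter Topology in
lemma coeffs_zero (a : ℕ → ℂ) (h : ∀ q : ℂ, ‖q‖ < 1 → HasSum (fun n => a n * q ^ n) 0) (n : ℕ) :
    a n = 0 := by
  have h1 : HasFPowerSeriesAt (0 : ℂ → ℂ) (FormalMultilinearSeries.ofScalars ℂ a) 0 := by
    rw [hasFPowerSeriesAt_iff]
    filter_upwards [Metric.ball_mem_nhds (0 : ℂ) one_pos] with z hz
    have := h z (by simpa using hz)
    simpa [FormalMultilinearSeries.coeff_ofScalars, mul_comm] using this
  have h2 := congrArg (fun P => FormalMultilinearSeries.coeff P n) h1.eq_zero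
  simp only [FormalMultilinearSeries.coeff_ofScalars] at h2
  rw [h2]
  rfl

open ArithmeticFunction in
lemma term_bound (i n : ℕ) (q : ℂ) (r : ℝ) (hq : ‖q‖ ≤ r) :
    ‖(n : ℂ) ^ i * (sigma 2 n : ℂ) * q ^ n‖ ≤ (n : ℝ) ^ (i + 3) * r ^ n := by
  have h1 : ((sigma 2 n : ℕ) : ℝ) ≤ (n : ℝ) ^ 3 := by exact_mod_cast sigma_le_pow_succ 2 n
  rw [norm_mul, norm_mul, norm_pow, norm_pow, Complex.norm_natCast, Complex.norm_natCast, pow_add]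
  gcongr

open ArithmeticFunction in
lemma term_summable (i : ℕ) (q : ℂ) (hq : ‖q‖ < 1) :
    Summable (fun n : ℕ => (n : ℂ) ^ i * (sigma 2 n : ℂ) * q ^ n) := by
  refine Summable.of_norm_bounded (g := fun n : ℕ => (n : ℝ) ^ (i + 3) * ‖q‖ ^ n) ?_
    (fun n => term_bound i n q _ le_rfl)
  exact summable_pow_mul_geometric_of_norm_lt_one (i + 3) (by simpa using hq)

open ArithmeticFunction Filter Topology in
lemma D_hasSum (i : ℕ) : ∀ q : ℂ, ‖q‖ < 1 →
    HasSum (fun n : ℕ => (n : ℂ) ^ i * (sigma 2 n : ℂ) * q ^ n) ((Dop^[i] F₃) q) := by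
  induction i with
  | zero =>
    intro q hq
    have hs := term_summable 0 q hq
    have h := tsum_pow_div_one_sub_eq_tsum_sigma hq 2
    rw [tsum_pnat_eq_tsum_succ (f := fun n : ℕ => (n : ℂ) ^ 2 * q ^ n / (1 - q ^ n)),
      tsum_pnat_eq_tsum_succ (f := fun n : ℕ => (sigma 2 n : ℂ) * q ^ n)] at h
    convert hs.hasSum using 1
    rw [hs.tsum_eq_zero_add]
    simpa [F₃] using h
  | succ i ih =>
    intro q hq
    obtain ⟨r, hr1, hr2⟩ := exists_between hq
    have hr0 : 0 ≤ r := (norm_nonneg q).trans hr1.le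
    have hu : Summable (fun n : ℕ => (n : ℝ) ^ (i + 3) * r ^ n) :=
      summable_pow_mul_geometric_of_norm_lt_one (i + 3)
        (by rw [Real.norm_eq_abs, abs_of_nonneg hr0]; exact hr2)
    have hqb : q ∈ Metric.ball (0 : ℂ) r := by simpa using hr1
    have key := Complex.hasSum_deriv_of_summable_norm
      (F := fun (n : ℕ) (w : ℂ) => (n : ℂ) ^ i * (sigma 2 n : ℂ) * w ^ n)
      (U := Metric.ball (0 : ℂ) r) hu
      (fun n => by fun_prop) Metric.isOpen_ball
      (fun n w hw => term_bound i n w r (by simpa using (Metric.mem_ball.1 hw).le)) hqb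
    have heq : deriv (Dop^[i] F₃) q
        = deriv (fun w : ℂ => ∑' n : ℕ, (n : ℂ) ^ i * (sigma 2 n : ℂ) * w ^ n) q := by
      apply Filter.EventuallyEq.deriv_eq
      filter_upwards [Metric.isOpen_ball.mem_nhds hqb] with w hw
      have hw' : ‖w‖ < 1 := lt_trans (by simpa using hw) hr2
      exact (ih w hw').tsum_eq.symm
    rw [← heq] at key
    rw [Function.iterate_succ_apply']
    have := key.mul_left q
    refine (hasSum_congr_aux fun n => ?_).mp this
    rw [deriv_const_mul_field, deriv_pow_field]
    rcases n with _ | n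
    · simp
    · push_cast
      ring

lemma shift_hasSum (a : ℕ → ℂ) (q s : ℂ) (j : ℕ) (h : HasSum (fun n => a n * q ^ n) s) :
    HasSum (fun n => (if j ≤ n then a (n - j) else 0) * q ^ n) (q ^ j * s) := by
  have h2 := h.mul_left (q ^ j)
  have hinj : Function.Injective (fun n : ℕ => n + j) := add_left_injective j
  rw [← hinj.hasSum_iff]
  · refine (hasSum_congr_aux fun n => ?_).mp h2
    simp [pow_add]; ring
  · intro n hn
    have : ¬ j ≤ n := fun hjn => hn ⟨n - j, by simp; omega⟩
    simp [this]

open ArithmeticFunction in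
lemma recurrence (m J : ℕ) (p : ℕ → Polynomial ℂ)
    (hJ : ∀ i ≤ m, (p i).natDegree < J)
    (h : ∀ q : ℂ, ‖q‖ < 1 →
      ∑ i ∈ Finset.range (m + 1), (p i).eval q * (Dop^[i] F₃) q = 0) (n : ℕ) (hn : J ≤ n) :
    ∑ i ∈ Finset.range (m + 1), ∑ j ∈ Finset.range J,
      (p i).coeff j * (((n - j : ℕ) : ℂ) ^ i * (sigma 2 (n - j) : ℂ)) = 0 := by
  have := coeffs_zero (fun n => ∑ i ∈ Finset.range (m + 1), ∑ j ∈ Finset.range J,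
      (p i).coeff j * (if j ≤ n then (((n - j : ℕ) : ℂ) ^ i * (sigma 2 (n - j) : ℂ)) else 0)) ?_ n
  · rw [← this]
    refine Finset.sum_congr rfl fun i _ => Finset.sum_congr rfl fun j hj => ?_
    rw [if_pos (by have := Finset.mem_range.1 hj; omega)]
  · intro q hq
    have h0 := h q hq
    simp_rw [Finset.sum_mul]
    suffices hsuf : HasSum (fun n => ∑ i ∈ Finset.range (m + 1), ∑ j ∈ Finset.range J,
      (p i).coeff j * (if j ≤ n then (((n - j : ℕ) : ℂ) ^ i * (sigma 2 (n - j) : ℂ)) else 0) *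
        q ^ n) (∑ i ∈ Finset.range (m + 1), (p i).eval q * (Dop^[i] F₃) q) by
      rwa [h0] at hsuf
    refine hasSum_sum fun i hi => ?_
    rw [Polynomial.eval_eq_sum_range' (hJ i (by have := Finset.mem_range.1 hi; omega)),
      Finset.sum_mul]
    refine hasSum_sum fun j _ => ?_
    have := (shift_hasSum _ q _ j (D_hasSum i q hq)).mul_left ((p i).coeff j)
    rw [mul_assoc]
    refine (hasSum_congr_aux fun n => ?_).mp this
    ring

/-- `σ₂(n)/n²`. -/
noncomputable def fdiv (n : ℕ) : ℝ := ∑ d ∈ n.divisors, ((d : ℝ) ^ 2)⁻¹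

open ArithmeticFunction in
lemma sigma_eq_fdiv (n : ℕ) : ((sigma 2 n : ℕ) : ℝ) = (n : ℝ) ^ 2 * fdiv n := by
  rw [sigma_eq_sum_div, fdiv, Finset.mul_sum]
  push_cast
  refine Finset.sum_congr rfl fun d hd => ?_
  have hd0 : (d : ℝ) ≠ 0 := by
    have := Nat.pos_of_mem_divisors hd
    positivity
  rw [Nat.cast_div (Nat.dvd_of_mem_divisors hd) hd0]
  field_simp

/-- Truncation of `fdiv`. -/
noncomputable def ftr (K n : ℕ) : ℝ := ∑ d ∈ Finset.Icc 1 K, if d ∣ n then ((d : ℝ) ^ 2)⁻¹ else 0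

lemma fdiv_ftr (K n : ℕ) (hn : 0 < n) : ftr K n ≤ fdiv n ∧ fdiv n ≤ ftr K n + 2 / (K + 1) := by
  have h1 : fdiv n = ftr K n + ∑ d ∈ n.divisors with ¬ d ≤ K, ((d : ℝ) ^ 2)⁻¹ := by
    rw [fdiv, ← Finset.sum_filter_add_sum_filter_not n.divisors (fun d => d ≤ K), ftr,
      ← Finset.sum_filter]
    congr 1
    refine Finset.sum_congr ?_ fun _ _ => rfl
    ext d
    simp only [Finset.mem_filter, Nat.mem_divisors, Finset.mem_Icc]
    constructor
    · rintro ⟨⟨h, _⟩, h2⟩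
      exact ⟨⟨Nat.pos_of_dvd_of_pos h hn, h2⟩, h⟩
    · rintro ⟨⟨_, h2⟩, h⟩
      exact ⟨⟨h, hn.ne'⟩, h2⟩
  have h2 : ∑ d ∈ n.divisors with ¬ d ≤ K, ((d : ℝ) ^ 2)⁻¹ ≤ 2 / (K + 1) := by
    refine le_trans ?_ (sum_Ioo_inv_sq_le (α := ℝ) K (n + 1))
    refine Finset.sum_le_sum_of_subset_of_nonneg ?_ fun _ _ _ => by positivity
    intro d hd
    simp only [Finset.mem_filter, Nat.mem_divisors, Finset.mem_Ioo] at hd ⊢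
    have := Nat.le_of_dvd hn hd.1.1
    omega
  have h3 : 0 ≤ ∑ d ∈ n.divisors with ¬ d ≤ K, ((d : ℝ) ^ 2)⁻¹ :=
    Finset.sum_nonneg fun _ _ => by positivity
  constructor <;> linarith

lemma fdiv_bound (n : ℕ) : ‖fdiv n‖ ≤ 2 := by
  have h0 : 0 ≤ fdiv n := Finset.sum_nonneg fun _ _ => by positivity
  rw [Real.norm_eq_abs, abs_of_nonneg h0]
  rcases Nat.eq_zero_or_pos n with rfl | hn
  · simp [fdiv]
  · have := (fdiv_ftr 0 n hn).2
    simpa [ftr] using this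

lemma key (J j0 : ℕ) (hj0 : j0 ≤ J) : ∃ δ : ℝ, 0 < δ ∧ ∀ ε : ℝ, 0 < ε → ∀ B : ℕ, ∃ n n' : ℕ,
    B ≤ n ∧ B ≤ n' ∧ (∀ j ≤ J, j ≠ j0 → |fdiv (n - j) - fdiv (n' - j)| ≤ ε) ∧
    δ - ε ≤ fdiv (n - j0) - fdiv (n' - j0) := by
  obtain ⟨p, hpJ, hp⟩ := Nat.exists_infinite_primes (J + 2)
  have hp0 : 0 < p := hp.pos
  refine ⟨((p : ℝ) ^ 2)⁻¹, by positivity, fun ε hε B => ?_⟩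
  obtain ⟨K0, hK0⟩ := exists_nat_gt (2 / ε)
  set K := max K0 p
  have hKp : p ≤ K := le_max_right _ _
  have hK : (2 : ℝ) / (K + 1) ≤ ε := by
    have : (K0 : ℝ) ≤ K := by exact_mod_cast le_max_left _ _
    rw [div_le_iff₀ (by positivity)]
    rw [div_lt_iff₀ hε] at hK0
    nlinarith
  set L := ∏ d ∈ Finset.Icc 1 K with ¬ p ∣ d, d with hL
  have hcop : Nat.Coprime L p := by
    refine Nat.Coprime.prod_left fun d hd => ?_
    exact ((Nat.Prime.coprime_iff_not_dvd hp).2 (Finset.mem_filter.1 hd).2).symm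
  have hL0 : 0 < L := Finset.prod_pos fun d hd => by
    have := (Finset.mem_Icc.1 (Finset.mem_filter.1 hd).1).1; omega
  set n := p * (B + J + 1) + j0 with hn
  obtain ⟨x, hx1, hx2⟩ := Nat.chineseRemainder hcop n (J + 1)
  set n' := x + p * L * (B + J + 1) with hn'
  have hnB : B + J + 1 ≤ n := by nlinarith
  have hnB' : B + J + 1 ≤ n' := by nlinarith [Nat.mul_pos hp0 hL0]
  have hLd : (L : ℤ) ∣ n - n' := by
    have h1 : (L : ℤ) ∣ n - x := (Nat.modEq_iff_dvd.1 hx1)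
    have h2 : (n : ℤ) - n' = (n - x) - L * (p * (B + J + 1)) := by rw [hn']; push_cast; ring
    rw [h2]
    exact dvd_sub h1 (dvd_mul_right _ _)
  have hpd : (p : ℤ) ∣ n - j0 := ⟨B + J + 1, by rw [hn]; push_cast; ring⟩
  have hpd' : (p : ℤ) ∣ n' - (J + 1) := by
    have h1 : (p : ℤ) ∣ (J + 1 : ℕ) - x := (Nat.modEq_iff_dvd.1 hx2)
    have h2 : (n' : ℤ) - (J + 1) = p * (L * (B + J + 1)) - ((J + 1 : ℕ) - x) := by
      rw [hn']; push_cast; ring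
    rw [h2]
    exact dvd_sub (dvd_mul_right _ _) h1
  have hA : ∀ j ≤ J, j ≠ j0 → ¬ p ∣ n - j := by
    intro j hj hne hd
    have hd : (p : ℤ) ∣ ((n - j : ℕ) : ℤ) := by exact_mod_cast hd
    rw [Nat.cast_sub (by omega)] at hd
    have h3 := dvd_sub hd hpd
    have := Int.eq_zero_of_abs_lt_dvd h3 (by rw [abs_lt]; constructor <;> omega)
    omega
  have hA' : ∀ j ≤ J, ¬ p ∣ n' - j := by
    intro j hj hd
    have hd : (p : ℤ) ∣ ((n' - j : ℕ) : ℤ) := by exact_mod_cast hd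
    rw [Nat.cast_sub (by omega)] at hd
    have h3 := dvd_sub hd hpd'
    have := Int.eq_zero_of_abs_lt_dvd h3 (by rw [abs_lt]; constructor <;> omega)
    omega
  have hB : ∀ j ≤ J, ∀ d ∈ Finset.Icc 1 K, ¬ p ∣ d → (d ∣ n - j ↔ d ∣ n' - j) := by
    intro j hj d hd hpd
    have hdL : d ∣ L := Finset.dvd_prod_of_mem (fun d => d) (Finset.mem_filter.2 ⟨hd, hpd⟩)
    have h1 : (d : ℤ) ∣ n - n' := (Int.natCast_dvd_natCast.2 hdL).trans hLd
    rw [← Int.natCast_dvd_natCast, ← Int.natCast_dvd_natCast, Nat.cast_sub (by omega),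
      Nat.cast_sub (by omega)]
    have h2 : (n : ℤ) - j = (n - n') + (n' - j) := by ring
    rw [h2]
    exact dvd_add_right h1
  refine ⟨n, n', by omega, by omega, fun j hj hne => ?_, ?_⟩
  · have he : ftr K (n - j) = ftr K (n' - j) := by
      refine Finset.sum_congr rfl fun d hd => ?_
      by_cases hpd : p ∣ d
      · rw [if_neg fun h => hA j hj hne (hpd.trans h), if_neg fun h => hA' j hj (hpd.trans h)]
      · simp only [hB j hj d hd hpd]
    have h1 := fdiv_ftr K (n - j) (by omega)
    have h2 := fdiv_ftr K (n' - j) (by omega)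
    rw [abs_le]
    constructor <;> linarith
  · have he : ((p : ℝ) ^ 2)⁻¹ ≤ ftr K (n - j0) - ftr K (n' - j0) := by
      rw [ftr, ftr, ← Finset.sum_sub_distrib]
      have h1 : ((p : ℝ) ^ 2)⁻¹ = (if p ∣ n - j0 then ((p : ℝ) ^ 2)⁻¹ else 0)
          - (if p ∣ n' - j0 then ((p : ℝ) ^ 2)⁻¹ else 0) := by
        rw [if_neg (hA' j0 hj0), if_pos, sub_zero]
        exact ⟨B + J + 1, by omega⟩
      rw [h1]
      refine Finset.single_le_sum (f := fun d : ℕ => (if d ∣ n - j0 then ((d : ℝ) ^ 2)⁻¹ else 0)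
          - (if d ∣ n' - j0 then ((d : ℝ) ^ 2)⁻¹ else 0)) ?_ (Finset.mem_Icc.2 ⟨hp0, hKp⟩)
      intro d hd
      by_cases hpd : p ∣ d
      · simp only [if_neg fun h => hA' j0 hj0 (hpd.trans h), sub_zero]
        positivity
      · simp only [hB j0 hj0 d hd hpd, sub_self, le_refl]
    have h1 := fdiv_ftr K (n - j0) (by omega)
    have h2 := fdiv_ftr K (n' - j0) (by omega)
    linarith

open Filter Topology in
lemma ratio_tendsto (j : ℕ) : Tendsto (fun n : ℕ => ((n - j : ℕ) : ℝ) / n) atTop (𝓝 1) := by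
  have h : Tendsto (fun n : ℕ => 1 - (j : ℝ) / n) atTop (𝓝 (1 - 0)) :=
    tendsto_const_nhds.sub (tendsto_const_div_atTop_nhds_zero_nat _)
  rw [sub_zero] at h
  refine h.congr' ?_
  filter_upwards [eventually_ge_atTop (j + 1)] with n hn
  rw [Nat.cast_sub (by omega)]
  have : (n : ℝ) ≠ 0 := by
    have : 0 < n := by omega
    positivity
  field_simp

open Filter Topology in
lemma T_tendsto (D i j : ℕ) (hi : i ≤ D) :
    Tendsto (fun n : ℕ => (((n - j : ℕ) : ℝ) ^ (i + 2) / (n : ℝ) ^ (D + 2)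
      - (if i = D then 1 else 0)) * fdiv (n - j)) atTop (𝓝 0) := by
  have hu : Tendsto (fun n : ℕ => (((n - j : ℕ) : ℝ) ^ (i + 2) / (n : ℝ) ^ (D + 2)
      - (if i = D then 1 else 0))) atTop (𝓝 0) := by
    have h1 : Tendsto (fun n : ℕ => (((n - j : ℕ) : ℝ) / n) ^ (i + 2) * ((n : ℝ)⁻¹) ^ (D - i)
        - (if i = D then 1 else 0)) atTop (𝓝 (1 ^ (i + 2) * 0 ^ (D - i)
        - (if i = D then 1 else 0))) :=
      (((ratio_tendsto j).pow _).mul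
        (tendsto_inv_atTop_nhds_zero_nat.pow _)).sub tendsto_const_nhds
    have h2 : (1 : ℝ) ^ (i + 2) * 0 ^ (D - i) - (if i = D then 1 else 0) = 0 := by
      split_ifs with h
      · simp [h]
      · rw [zero_pow (by omega)]; simp
    rw [h2] at h1
    refine h1.congr fun n => ?_
    congr 1
    rw [div_pow, inv_pow, ← div_eq_mul_inv, div_div, ← pow_add]
    congr 2
    omega
  have h3 : Tendsto (fun n : ℕ => ‖(((n - j : ℕ) : ℝ) ^ (i + 2) / (n : ℝ) ^ (D + 2)
      - (if i = D then 1 else 0))‖ * 2) atTop (𝓝 0) := by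
    simpa using hu.norm.mul_const 2
  refine squeeze_zero_norm (fun n => ?_) h3
  rw [norm_mul]
  gcongr
  exact fdiv_bound _

open Filter Topology ArithmeticFunction in
lemma g_tendsto (D J : ℕ) (p : ℕ → Polynomial ℂ)
    (h : ∀ n : ℕ, J ≤ n → ∑ i ∈ Finset.range (D + 1), ∑ j ∈ Finset.range J,
      (p i).coeff j * (((n - j : ℕ) : ℂ) ^ i * (sigma 2 (n - j) : ℂ)) = 0) :
    Tendsto (fun n : ℕ => ∑ j ∈ Finset.range J, (p D).coeff j * (fdiv (n - j) : ℂ))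
      atTop (𝓝 0) := by
  have h1 : Tendsto (fun n : ℕ => ∑ i ∈ Finset.range (D + 1), ∑ j ∈ Finset.range J,
      (p i).coeff j * (((((n - j : ℕ) : ℝ) ^ (i + 2) / (n : ℝ) ^ (D + 2)
      - (if i = D then 1 else 0)) * fdiv (n - j) : ℝ) : ℂ)) atTop (𝓝 0) := by
    have : (0 : ℂ) = ∑ i ∈ Finset.range (D + 1), ∑ j ∈ Finset.range J,
      (p i).coeff j * ((0 : ℝ) : ℂ) := by simp
    rw [this]
    refine tendsto_finsetSum _ fun i hi => tendsto_finsetSum _ fun j _ => ?_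
    refine Tendsto.const_mul _ ?_
    exact (Complex.continuous_ofReal.tendsto 0).comp
      (T_tendsto D i j (by have := Finset.mem_range.1 hi; omega))
  have h2 := h1.neg
  rw [neg_zero] at h2
  refine h2.congr' ?_
  filter_upwards [eventually_ge_atTop J] with n hn
  have h3 : ∀ i j : ℕ, (p i).coeff j * (((((n - j : ℕ) : ℝ) ^ (i + 2) / (n : ℝ) ^ (D + 2)
      - (if i = D then 1 else 0)) * fdiv (n - j) : ℝ) : ℂ)
      = ((p i).coeff j * (((n - j : ℕ) : ℂ) ^ i * (sigma 2 (n - j) : ℂ))) / (n : ℂ) ^ (D + 2)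
        - if i = D then (p i).coeff j * (fdiv (n - j) : ℂ) else 0 := by
    intro i j
    have hs : ((sigma 2 (n - j) : ℕ) : ℂ) = ((n - j : ℕ) : ℂ) ^ 2 * (fdiv (n - j) : ℂ) := by
      exact_mod_cast congrArg (fun x : ℝ => (x : ℂ)) (sigma_eq_fdiv (n - j))
    rw [hs]
    push_cast
    split_ifs <;> push_cast <;> ring
  simp_rw [h3, Finset.sum_sub_distrib, ← Finset.sum_div]
  rw [h n hn, zero_div, zero_sub, neg_neg, Finset.sum_comm]
  refine Finset.sum_congr rfl fun j _ => ?_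
  rw [Finset.sum_ite_eq' ]
  simp

open Filter Topology in
lemma no_rec (J : ℕ) (c : ℕ → ℂ) (j0 : ℕ) (hj0 : j0 < J) (hc : c j0 ≠ 0)
    (h : Tendsto (fun n : ℕ => ∑ j ∈ Finset.range J, c j * (fdiv (n - j) : ℂ))
      atTop (𝓝 0)) : False := by
  obtain ⟨δ, hδ, H⟩ := key J j0 hj0.le
  have hc' : 0 < ‖c j0‖ := norm_pos_iff.2 hc
  set S := ∑ j ∈ Finset.range J, ‖c j‖ with hS
  have hS0 : 0 ≤ S := Finset.sum_nonneg fun _ _ => norm_nonneg _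
  set η := ‖c j0‖ * δ / 4 with hη
  have hη0 : 0 < η := by positivity
  obtain ⟨B, hB⟩ := (Metric.tendsto_atTop.1 h) η hη0
  set ε := η / (S + ‖c j0‖) with hε
  have hε0 : 0 < ε := by positivity
  have hεS : ε * (S + ‖c j0‖) = η := by rw [hε]; field_simp
  obtain ⟨n, n', hn, hn', h1, h2⟩ := H ε hε0 B
  have b1 := hB n hn
  have b2 := hB n' hn'
  rw [dist_zero_right] at b1 b2
  set g := fun n : ℕ => ∑ j ∈ Finset.range J, c j * (fdiv (n - j) : ℂ) with hg
  have e1 : g n - g n' = c j0 * ((fdiv (n - j0) - fdiv (n' - j0) : ℝ) : ℂ)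
      + ∑ j ∈ (Finset.range J).erase j0, c j * ((fdiv (n - j) - fdiv (n' - j) : ℝ) : ℂ) := by
    rw [Finset.add_sum_erase _ (fun j => c j * ((fdiv (n - j) - fdiv (n' - j) : ℝ) : ℂ))
      (Finset.mem_range.2 hj0), hg]
    simp only
    rw [← Finset.sum_sub_distrib]
    refine Finset.sum_congr rfl fun j _ => ?_
    push_cast; ring
  have e2 : ‖∑ j ∈ (Finset.range J).erase j0, c j * ((fdiv (n - j) - fdiv (n' - j) : ℝ) : ℂ)‖
      ≤ S * ε := by
    rw [hS, Finset.sum_mul]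
    refine (norm_sum_le _ _).trans ?_
    refine le_trans (Finset.sum_le_sum (g := fun j => ‖c j‖ * ε) fun j hj => ?_)
      (Finset.sum_le_sum_of_subset_of_nonneg (Finset.erase_subset _ _)
        fun _ _ _ => by positivity)
    rw [Finset.mem_erase, Finset.mem_range] at hj
    rw [norm_mul, Complex.norm_real, Real.norm_eq_abs]
    gcongr
    exact h1 j hj.2.le hj.1
  have e3 : ‖c j0‖ * (δ - ε) ≤ ‖c j0 * ((fdiv (n - j0) - fdiv (n' - j0) : ℝ) : ℂ)‖ := by
    rw [norm_mul, Complex.norm_real, Real.norm_eq_abs]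
    gcongr
    exact h2.trans (le_abs_self _)
  have e4 : c j0 * ((fdiv (n - j0) - fdiv (n' - j0) : ℝ) : ℂ) = g n - g n'
      - ∑ j ∈ (Finset.range J).erase j0, c j * ((fdiv (n - j) - fdiv (n' - j) : ℝ) : ℂ) := by
    rw [e1]; ring
  rw [e4] at e3
  have e5 := (norm_sub_le (g n - g n') (∑ j ∈ (Finset.range J).erase j0,
    c j * ((fdiv (n - j) - fdiv (n' - j) : ℝ) : ℂ)))
  have e6 := norm_sub_le (g n) (g n')
  have e7 : ‖c j0‖ * δ = 4 * η := by rw [hη]; ring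
  nlinarith

theorem F₃_derivatives_linearly_independent
    (m : ℕ) (p : ℕ → Polynomial ℂ) (hp : ∃ i ≤ m, p i ≠ 0) :
    ∃ q : ℂ, ‖q‖ < 1 ∧
      ∑ i ∈ Finset.range (m + 1), (p i).eval q * (Dop^[i] F₃) q ≠ 0 := by
  by_contra! hcon
  classical
  obtain ⟨i0, hi0, hpi0⟩ := hp
  set D := Nat.findGreatest (fun i => p i ≠ 0) m with hD
  have hDm : D ≤ m := Nat.findGreatest_le m
  have hpD : p D ≠ 0 := Nat.findGreatest_spec (P := fun i => p i ≠ 0) hi0 hpi0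
  have hgt : ∀ i, D < i → i ≤ m → p i = 0 := fun i h1 h2 => by
    have := Nat.findGreatest_is_greatest (P := fun i => p i ≠ 0) h1 h2
    simpa using this
  have hcon' : ∀ q : ℂ, ‖q‖ < 1 →
      ∑ i ∈ Finset.range (D + 1), (p i).eval q * (Dop^[i] F₃) q = 0 := by
    intro q hq
    rw [← hcon q hq]
    refine Finset.sum_subset (Finset.range_subset_range.2 (by omega)) fun i hi hi' => ?_
    rw [Finset.mem_range] at hi hi'
    rw [hgt i (by omega) (by omega)]
    simp
  set J := (Finset.range (D + 1)).sup (fun i => (p i).natDegree) + 1 with hJ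
  have hJd : ∀ i ≤ D, (p i).natDegree < J := fun i hi =>
    Nat.lt_succ_of_le (Finset.le_sup (f := fun i => (p i).natDegree)
      (Finset.mem_range.2 (by omega)))
  have hg := g_tendsto D J p (fun n hn => recurrence D J p hJd hcon' n hn)
  exact no_rec J (fun j => (p D).coeff j) (p D).natDegree (hJd D le_rfl)
    (by simpa using hpD) hg
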